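/- Let U be a non-empty finite set of complex roots of unity with ζ^N = 1 for all ζ ∈ U, and suppose that a_k = Σ_{ζ∈U} ζ^k is a non-negative integer for every natural number k. Then U is invariant under the Galois action: if ζ ∈ U and ζ' is a root of unity having the same multiplicative order as ζ, then ζ' ∈ U. Moreover, a_k = a_{k'} whenever gcd(k, N) = gcd(k', N). -/

import Mathlib

/-!
Both claims rest on one fact: an integer polynomial vanishing at a root of unity `x` vanishes at
every `y` of the same order, because `x` and `y` share the cyclotomic minimal polynomial
(`aeval_eq_intCast_of_orderOf_eq`, applied to polynomials taking an integer value at `x`).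

For the invariance of `U`, Fourier inversion on the `N`-th roots of unity shows that the integer
polynomial `∑ k < N, a_k X ^ k` takes the value `N` at `z⁻¹` when `z ∈ U`, and `0` at the inverses
of the other `N`-th roots of unity (`sum_powerSum_mul_inv_pow`). Since `ζ⁻¹` and `ζ'⁻¹` have the
same order, the value `N` at `ζ⁻¹` forces the value `N` at `ζ'⁻¹`.

For the dependence on `gcd(k, N)`, fix a primitive `N`-th root of unity `ω`. Writing the elements of
`U` as powers of `ω` gives `a_k = Q(ω ^ k)` for a fixed integer polynomial `Q`. As `a_k` is an integer
and `ω ^ k`, `ω ^ k'` have the same order `N / gcd(k, N)`, it follows that `a_k' = a_k`.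
-/

open Polynomial

theorem aeval_eq_intCast_of_orderOf_eq {x y : ℂ} (hx : 0 < orderOf x)
    (hxy : orderOf y = orderOf x) (p : ℤ[X]) (c : ℤ) (h : aeval x p = (c : ℂ)) :
    aeval y p = (c : ℂ) := by
  have px : IsPrimitiveRoot x (orderOf x) := IsPrimitiveRoot.orderOf x
  have py : IsPrimitiveRoot y (orderOf x) := hxy ▸ IsPrimitiveRoot.orderOf y
  have hmin : minpoly ℤ x = minpoly ℤ y := by
    rw [← cyclotomic_eq_minpoly px hx, ← cyclotomic_eq_minpoly py hx]
  have hdvd : minpoly ℤ x ∣ p - C c :=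
    minpoly.isIntegrallyClosed_dvd (px.isIntegral hx) (by simp [h])
  rw [hmin] at hdvd
  obtain ⟨q, hq⟩ := hdvd
  have h0 : aeval y (p - C c) = 0 := by rw [hq]; simp
  simpa [sub_eq_zero] using h0

/-- Fourier inversion on the `N`-th roots of unity, scaled by `N`. -/
theorem sum_powerSum_mul_inv_pow {N : ℕ} (hN : 0 < N) (U : Finset ℂ)
    (hroots : ∀ ζ ∈ U, ζ ^ N = 1) {z : ℂ} (hz : z ^ N = 1) :
    ∑ k ∈ Finset.range N, (∑ ζ ∈ U, ζ ^ k) * z⁻¹ ^ k = if z ∈ U then (N : ℂ) else 0 := by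
  have hz0 : z ≠ 0 := by
    rintro rfl
    simp [hN.ne'] at hz
  have key : ∀ ζ ∈ U, ∑ k ∈ Finset.range N, ζ ^ k * z⁻¹ ^ k = if z = ζ then (N : ℂ) else 0 := by
    intro ζ hζ
    simp_rw [← mul_pow]
    split_ifs with h
    · subst h
      simp [hz0]
    · have h1 : ζ * z⁻¹ ≠ 1 := fun e => h (by
        field_simp at e
        exact e.symm)
      rw [geom_sum_eq h1, mul_pow, hroots ζ hζ, inv_pow, hz]
      simp
  simp_rw [Finset.sum_mul]
  rw [Finset.sum_comm, Finset.sum_congr rfl key]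
  simp

/-- Let `U` be a nonempty finite set of complex roots of unity, all satisfying `ζ ^ N = 1`,
whose power sums `a_k = ∑ ζ ∈ U, ζ ^ k` are all non-negative integers. Then `U` is invariant
under the Galois action: any root of unity with the same multiplicative order as some
element of `U` also lies in `U`; and `a_k` only depends on `gcd(k, N)`. -/
theorem galois_invariance_of_power_sums
    (N : ℕ) (hN : 0 < N) (U : Finset ℂ) (hU : U.Nonempty)
    (hroots : ∀ ζ ∈ U, ζ ^ N = 1)
    (ha : ∀ k : ℕ, ∃ a : ℕ, (∑ ζ ∈ U, ζ ^ k) = (a : ℂ)) :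
    (∀ ζ ∈ U, ∀ ζ' : ℂ, (∃ m : ℕ, 0 < m ∧ ζ' ^ m = 1) →
      orderOf ζ' = orderOf ζ → ζ' ∈ U) ∧
    (∀ k k' : ℕ, Nat.gcd k N = Nat.gcd k' N →
      (∑ ζ ∈ U, ζ ^ k) = ∑ ζ ∈ U, ζ ^ k') := by
  choose a ha using ha
  refine ⟨fun ζ hζ ζ' _ hord => ?_, fun k k' hk => ?_⟩
  · have hpos : 0 < orderOf ζ :=
      orderOf_pos_iff.2 (isOfFinOrder_iff_pow_eq_one.2 ⟨N, hN, hroots ζ hζ⟩)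
    have hζ' : ζ' ^ N = 1 := by
      rw [← orderOf_dvd_iff_pow_eq_one, hord]
      exact orderOf_dvd_of_pow_eq_one (hroots ζ hζ)
    have hinv : ∀ x : ℂ, orderOf x⁻¹ = orderOf x := fun x => by
      simp only [orderOf_eq_orderOf_iff, inv_pow, inv_eq_one, implies_true]
    let P : ℤ[X] := ∑ k ∈ Finset.range N, C (a k : ℤ) * X ^ k
    have hP : ∀ z : ℂ, z ^ N = 1 → aeval z⁻¹ P = if z ∈ U then (N : ℂ) else 0 := by
      intro z hz
      rw [← sum_powerSum_mul_inv_pow hN U hroots hz]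
      simp [P, ha]
    have h := aeval_eq_intCast_of_orderOf_eq (x := ζ⁻¹) (y := ζ'⁻¹) (by rwa [hinv])
      (by rw [hinv, hinv, hord]) P N (by simp [hP ζ (hroots ζ hζ), hζ])
    rw [hP ζ' hζ'] at h
    by_contra hn
    rw [if_neg hn] at h
    exact hN.ne (by exact_mod_cast h)
  · have : NeZero N := ⟨hN.ne'⟩
    obtain ⟨ω, hω⟩ : ∃ ω : ℂ, IsPrimitiveRoot ω N := ⟨_, Complex.isPrimitiveRoot_exp N hN.ne'⟩
    have hex : ∀ ζ : ℂ, ∃ i : ℕ, ζ ∈ U → ω ^ i = ζ := fun ζ => by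
      by_cases h : ζ ∈ U
      · obtain ⟨i, -, hi⟩ := hω.eq_pow_of_pow_eq_one (hroots ζ h)
        exact ⟨i, fun _ => hi⟩
      · exact ⟨0, fun h' => absurd h' h⟩
    choose e he using hex
    let Q : ℤ[X] := ∑ ζ ∈ U, X ^ e ζ
    have hQ : ∀ n : ℕ, aeval (ω ^ n) Q = ∑ ζ ∈ U, ζ ^ n := by
      intro n
      simp only [Q, map_sum, map_pow, aeval_X]
      refine Finset.sum_congr rfl fun ζ hζ => ?_
      rw [← pow_mul, mul_comm, pow_mul, he ζ hζ]
    have hfin : IsOfFinOrder ω := isOfFinOrder_iff_pow_eq_one.2 ⟨N, hN, hω.pow_eq_one⟩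
    have hord : orderOf (ω ^ k') = orderOf (ω ^ k) := by
      rw [hfin.orderOf_pow, hfin.orderOf_pow, ← hω.eq_orderOf, Nat.gcd_comm N, Nat.gcd_comm N, hk]
    have h := aeval_eq_intCast_of_orderOf_eq (orderOf_pos_iff.2 (hfin.pow (n := k))) hord Q (a k)
      (by simp [hQ, ha])
    rw [hQ] at h
    rw [h, ha k]
    simp
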